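/- arXiv:1707.00324 — 2 statements merged into one kernel-verified Lean document; each statement's English description precedes it below -/
import Mathlib

section
/- Let n and k be positive integers with k ≤ n/2. Then there exists a finite set X of vectors in ℝ^n such that: (1) every x ∈ X has at most k nonzero entries and satisfies ‖x‖_2 ≤ √k; (2) for all distinct x, y ∈ X, ‖x − y‖_2 ≥ √(k/2); and (3) |X| ≥ (n/k)^{k/2}, i.e., ln|X| ≥ (k/2) ln(n/k). -/
open Finset

/-!
A `{-1, 0, 1}`-valued vector with exactly `k` nonzero entries has norm `√k`, and two such
vectors that differ in more than `k / 2` coordinates are at distance more than `√(k / 2)`, because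
distinct entries differ by at least `1`. It therefore suffices to find a large code of constant
weight `k` over an alphabet with `q = 3` letters whose Hamming distances exceed `m = ⌊k / 2⌋`. A
maximal such code has at least `C(n, k) (q - 1)^k / (C(n, m) q^m)` words, since the Hamming balls of
radius `m` around its words cover all words of weight `k`. The ratio of the binomial coefficients is
at least `((n - m) / k)^(k - m)`, and `n - m ≥ 3n / 4` because `2k ≤ n`; the loss of the factor
`3 / 4` is compensated by the choice of signs, since `3 (q - 1)² / 4 ≥ q` for `q ≥ 3`.
-/

namespace SparsePacking

lemma exists_subset_pairwise_not_card_le_mul {α : Type*} {r : α → α → Prop}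
    [DecidableRel r] (hrefl : ∀ x, r x x) (hsymm : ∀ x y, r x y → r y x) (s : Finset α) {B : ℕ}
    (hB : ∀ x ∈ s, #{y ∈ s | r x y} ≤ B) :
    ∃ t ⊆ s, (t : Set α).Pairwise (fun x y ↦ ¬ r x y) ∧ #s ≤ #t * B := by
  classical
  obtain ⟨t, ht, hmax⟩ :=
    (s.powerset.filter fun t : Finset α ↦ (t : Set α).Pairwise fun x y ↦ ¬ r x y).exists_maximal
      ⟨∅, by simp⟩
  simp only [mem_filter, mem_powerset] at ht hmax
  obtain ⟨hts, hpair⟩ := ht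
  refine ⟨t, hts, hpair, ?_⟩
  have hcover : s ⊆ t.biUnion fun x ↦ {y ∈ s | r x y} := by
    intro y hy
    by_contra hfar
    simp only [mem_biUnion, mem_filter, hy, true_and, not_exists, not_and] at hfar
    have hinsert : (insert y t : Set α).Pairwise fun x y ↦ ¬ r x y :=
      hpair.insert fun x hx _ ↦ ⟨fun h ↦ hfar x hx (hsymm _ _ h), hfar x hx⟩
    have hyt : y ∈ t :=
      hmax ⟨insert_subset hy hts, by simpa using hinsert⟩ (subset_insert y t) (mem_insert_self y t)
    exact hfar y hyt (hrefl y)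
  exact (card_le_card hcover).trans (card_biUnion_le_card_mul _ _ _ fun x hx ↦ hB x (hts hx))

section HammingCounting

variable {ι α : Type*} [Fintype ι] [DecidableEq ι]

lemma card_piFinset_ite_singleton (s : Finset ι) (t : Finset α) (x : ι → α) :
    #(Fintype.piFinset fun i ↦ if i ∈ s then t else {x i}) = #t ^ #s := by
  simp only [Fintype.card_piFinset, apply_ite card, card_singleton, prod_ite_mem, univ_inter,
    prod_const]

variable [Fintype α] [DecidableEq α]

lemma card_hammingDist_le {m : ℕ} (hm : m ≤ Fintype.card ι) (x : ι → α) :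
    #{y | hammingDist x y ≤ m} ≤ (Fintype.card ι).choose m * Fintype.card α ^ m := by
  have hcover : ({y | hammingDist x y ≤ m} : Finset (ι → α)) ⊆
      (powersetCard m univ).biUnion fun s ↦
        Fintype.piFinset fun i ↦ if i ∈ s then univ else {x i} := by
    intro y hy
    obtain ⟨s, hdiff, -, hs⟩ := exists_subsuperset_card_eq (subset_univ {i | x i ≠ y i})
      (mem_filter.1 hy).2 hm
    refine mem_biUnion.2 ⟨s, by simp [hs], Fintype.mem_piFinset.2 fun i ↦ ?_⟩
    split_ifs with hi
    · exact mem_univ _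
    · by_contra hne
      exact hi (hdiff (by simpa [eq_comm] using hne))
  calc #{y | hammingDist x y ≤ m}
      ≤ #(powersetCard m (univ : Finset ι)) * Fintype.card α ^ m := by
        refine (card_le_card hcover).trans (card_biUnion_le_card_mul _ _ _ fun s hs ↦ ?_)
        rw [card_piFinset_ite_singleton, (mem_powersetCard.1 hs).2, card_univ]
    _ = (Fintype.card ι).choose m * Fintype.card α ^ m := by rw [card_powersetCard, card_univ]

lemma card_hammingNorm_eq [Zero α] (k : ℕ) :
    #{x : ι → α | hammingNorm x = k} =
      (Fintype.card ι).choose k * (Fintype.card α - 1) ^ k := by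
  have hmaps : (({x : ι → α | hammingNorm x = k} : Finset _) : Set (ι → α)).MapsTo
      (fun x ↦ ({i | x i ≠ 0} : Finset ι)) (powersetCard k (univ : Finset ι)) := by
    intro x hx
    simpa [hammingNorm] using hx
  have hfiber : ∀ s ∈ powersetCard k (univ : Finset ι),
      #{x ∈ ({x : ι → α | hammingNorm x = k} : Finset _) | ({i | x i ≠ 0} : Finset ι) = s} =
        (Fintype.card α - 1) ^ k := by
    intro s hs
    obtain ⟨-, rfl⟩ := mem_powersetCard.1 hs
    rw [← card_univ, ← card_erase_of_mem (mem_univ (0 : α)), ← card_piFinset_ite_singleton s _ 0]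
    congr 1
    ext x
    have hweight : ({i | x i ≠ 0} : Finset ι) = s → hammingNorm x = #s := congrArg card
    rw [mem_filter, mem_filter_univ, and_iff_right_of_imp hweight, Fintype.mem_piFinset,
      Finset.ext_iff]
    refine forall_congr' fun i ↦ ?_
    split_ifs with hi <;> simp [hi]
  rw [card_eq_sum_card_fiberwise hmaps, sum_congr rfl hfiber, sum_const, card_powersetCard,
    card_univ, smul_eq_mul]

end HammingCounting

lemma exists_constantWeight_code_choose_le {ι α : Type*} [Fintype ι] [Fintype α] [DecidableEq α]
    [Zero α] {m : ℕ} (hm : m ≤ Fintype.card ι) (k : ℕ) :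
    ∃ X : Finset (ι → α), (∀ x ∈ X, hammingNorm x = k) ∧
      (X : Set (ι → α)).Pairwise (fun x y ↦ m < hammingDist x y) ∧
      (Fintype.card ι).choose k * (Fintype.card α - 1) ^ k ≤
        #X * ((Fintype.card ι).choose m * Fintype.card α ^ m) := by
  classical
  obtain ⟨X, hweight, hdist, hcard⟩ := exists_subset_pairwise_not_card_le_mul
    (r := fun x y : ι → α ↦ hammingDist x y ≤ m) (by simp)
    (fun x y h ↦ hammingDist_comm x y ▸ h) {x | hammingNorm x = k} fun x _ ↦
      (card_le_card (filter_subset_filter _ (subset_univ _))).trans (card_hammingDist_le hm x)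
  exact ⟨X, fun x hx ↦ (mem_filter.1 (hweight hx)).2, by simpa only [not_le] using hdist,
    card_hammingNorm_eq (ι := ι) (α := α) k ▸ hcard⟩

section Estimates

lemma descFactorial_mul_pow_le {a b : ℕ} (hab : b ≤ a) (r : ℕ) :
    b.descFactorial r * a ^ r ≤ a.descFactorial r * b ^ r := by
  induction r with
  | zero => simp
  | succ r ih =>
    have hfactor : (b - r) * a ≤ (a - r) * b := by
      rw [Nat.sub_mul, Nat.sub_mul, mul_comm b a]
      gcongr
    calc b.descFactorial (r + 1) * a ^ (r + 1)
        = ((b - r) * a) * (b.descFactorial r * a ^ r) := by rw [Nat.descFactorial_succ]; ring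
      _ ≤ ((a - r) * b) * (a.descFactorial r * b ^ r) := by gcongr
      _ = a.descFactorial (r + 1) * b ^ (r + 1) := by rw [Nat.descFactorial_succ]; ring

lemma choose_mul_pow_le {a b : ℕ} (hab : b ≤ a) (r : ℕ) :
    b.choose r * a ^ r ≤ a.choose r * b ^ r := by
  have h := descFactorial_mul_pow_le hab r
  simp only [Nat.descFactorial_eq_factorial_mul_choose, mul_assoc] at h
  exact Nat.le_of_mul_le_mul_left h r.factorial_pos

lemma choose_mul_sub_pow_le {n k m : ℕ} (hmk : m ≤ k) (hn : k + m ≤ n) :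
    n.choose m * (n - m) ^ (k - m) ≤ n.choose k * k ^ (k - m) := by
  have hratio := choose_mul_pow_le (Nat.le_sub_of_add_le hn) (k - m)
  rw [Nat.choose_symm hmk] at hratio
  refine Nat.le_of_mul_le_mul_left ?_ (Nat.choose_pos hmk)
  calc k.choose m * (n.choose m * (n - m) ^ (k - m))
      = n.choose m * (k.choose m * (n - m) ^ (k - m)) := by ring
    _ ≤ n.choose m * ((n - m).choose (k - m) * k ^ (k - m)) := by gcongr
    _ = (n.choose k * k.choose m) * k ^ (k - m) := by rw [Nat.choose_mul hmk]; ring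
    _ = k.choose m * (n.choose k * k ^ (k - m)) := by ring

lemma mul_div_pow_le_of_choose_mul_le {n k : ℕ} {a b N : ℝ} (hk : 0 < k) (hkn : 2 * k ≤ n)
    (ha : 0 ≤ a) (h : n.choose k * a ≤ N * (n.choose (k / 2) * b)) :
    a * (3 / 4 * (n / k : ℝ)) ^ (k - k / 2) ≤ N * b := by
  have hchoose_pos : (0 : ℝ) < n.choose (k / 2) := by
    exact_mod_cast Nat.choose_pos (by lia : k / 2 ≤ n)
  have hthree_quarters : 3 / 4 * (n : ℝ) ≤ (n - k / 2 : ℕ) := by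
    have : 3 * n ≤ 4 * (n - k / 2) := by lia
    have : (3 : ℝ) * n ≤ 4 * (n - k / 2 : ℕ) := by exact_mod_cast this
    linarith
  have hchoose : (n.choose (k / 2) : ℝ) * (n - k / 2 : ℕ) ^ (k - k / 2) ≤
      n.choose k * (k : ℝ) ^ (k - k / 2) := by
    exact_mod_cast choose_mul_sub_pow_le (n := n) (Nat.div_le_self k 2) (by lia)
  rw [← mul_div_assoc, div_pow, ← mul_div_assoc, div_le_iff₀ (by positivity)]
  refine le_of_mul_le_mul_left ?_ hchoose_pos
  calc n.choose (k / 2) * (a * (3 / 4 * (n : ℝ)) ^ (k - k / 2))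
      ≤ n.choose (k / 2) * (a * (n - k / 2 : ℕ) ^ (k - k / 2)) := by gcongr
    _ = a * (n.choose (k / 2) * (n - k / 2 : ℕ) ^ (k - k / 2)) := by ring
    _ ≤ a * (n.choose k * (k : ℝ) ^ (k - k / 2)) := by gcongr
    _ = (n.choose k * a) * (k : ℝ) ^ (k - k / 2) := by ring
    _ ≤ (N * (n.choose (k / 2) * b)) * (k : ℝ) ^ (k - k / 2) := by gcongr
    _ = n.choose (k / 2) * (N * b * (k : ℝ) ^ (k - k / 2)) := by ring

lemma rpow_half_mul_pow_half_le {q t : ℝ} (hq : 3 ≤ q) (ht : 4 / 3 ≤ t) (k : ℕ) :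
    t ^ ((k : ℝ) / 2) * q ^ (k / 2) ≤ (q - 1) ^ k * (3 / 4 * t) ^ (k - k / 2) := by
  have hhalf : ((k / 2 : ℕ) : ℝ) ≤ (k : ℝ) / 2 := by exact_mod_cast Nat.cast_div_le
  have hhalf_compl : (k : ℝ) / 2 ≤ (k - k / 2 : ℕ) := by
    rw [Nat.cast_sub (Nat.div_le_self k 2)]
    linarith
  have hq_sq : q ≤ (q - 1) ^ 2 * (3 / 4) := by nlinarith
  calc t ^ ((k : ℝ) / 2) * q ^ (k / 2)
      ≤ t ^ ((k : ℝ) / 2) * q ^ ((k : ℝ) / 2) := by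
        rw [← Real.rpow_natCast q]
        gcongr
        linarith
    _ = (t * q) ^ ((k : ℝ) / 2) := (Real.mul_rpow (by linarith) (by linarith)).symm
    _ ≤ ((q - 1) ^ 2 * (3 / 4 * t)) ^ ((k : ℝ) / 2) := by
        refine Real.rpow_le_rpow (by positivity) ?_ (by positivity)
        nlinarith
    _ = (q - 1) ^ k * (3 / 4 * t) ^ ((k : ℝ) / 2) := by
        rw [Real.mul_rpow (by positivity) (by linarith), ← Real.rpow_natCast (q - 1) 2,
          ← Real.rpow_mul (by linarith), Nat.cast_ofNat, mul_div_cancel₀ _ two_ne_zero,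
          Real.rpow_natCast]
    _ ≤ (q - 1) ^ k * (3 / 4 * t) ^ (k - k / 2) := by
        rw [← Real.rpow_natCast (3 / 4 * t)]
        gcongr
        · exact pow_nonneg (by linarith) k
        · linarith

end Estimates

lemma exists_constantWeight_code {ι α : Type*} [Fintype ι] [Fintype α] [DecidableEq α]
    [Zero α] (hα : 3 ≤ Fintype.card α) {k : ℕ} (hk : 0 < k) (hkn : 2 * k ≤ Fintype.card ι) :
    ∃ X : Finset (ι → α), (∀ x ∈ X, hammingNorm x = k) ∧
      (X : Set (ι → α)).Pairwise (fun x y ↦ k < 2 * hammingDist x y) ∧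
      ((Fintype.card ι : ℝ) / k) ^ ((k : ℝ) / 2) ≤ #X := by
  classical
  obtain ⟨X, hweight, hdist, hcard⟩ :=
    exists_constantWeight_code_choose_le (ι := ι) (α := α) (m := k / 2) (by lia) k
  refine ⟨X, hweight, hdist.imp fun h ↦ by lia, ?_⟩
  set n := Fintype.card ι
  set q := Fintype.card α
  have hcard_real : (n.choose k : ℝ) * (q - 1 : ℝ) ^ k ≤
      #X * (n.choose (k / 2) * (q : ℝ) ^ (k / 2)) := by
    rw [← Nat.cast_pred (by lia)]
    exact_mod_cast hcard
  have hq : (3 : ℝ) ≤ q := by exact_mod_cast hα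
  have ht : (4 / 3 : ℝ) ≤ n / k := by
    have : (2 : ℝ) * k ≤ n := by exact_mod_cast hkn
    rw [le_div_iff₀ (by positivity)]
    linarith
  refine le_of_mul_le_mul_right ?_ (show (0 : ℝ) < q ^ (k / 2) by positivity)
  exact (rpow_half_mul_pow_half_le hq ht k).trans
    (mul_div_pow_le_of_choose_mul_le hk hkn (pow_nonneg (by linarith) k) hcard_real)

lemma one_le_sq_coe_sub_coe {a b : SignType} (h : a ≠ b) : 1 ≤ ((a : ℝ) - b) ^ 2 := by
  cases a <;> cases b <;> first | contradiction | norm_num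

section SignVector

variable {ι : Type*}

/-- The point of Euclidean space with entries `-1`, `0`, `1` prescribed by a sign pattern; it turns
words over the three-letter alphabet `SignType` into sparse vectors. -/
noncomputable def signVector (x : ι → SignType) : EuclideanSpace ℝ ι :=
  WithLp.toLp 2 fun i ↦ (x i : ℝ)

lemma signVector_injective : Function.Injective (signVector (ι := ι)) := by
  intro x y hxy
  funext i
  by_contra hne
  have hcoord : (x i : ℝ) = y i := congrArg (fun v ↦ v.ofLp i) hxy
  have hsep := one_le_sq_coe_sub_coe hne
  norm_num [hcoord] at hsep

variable [Fintype ι]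

lemma ncard_support_signVector (x : ι → SignType) :
    {i | signVector x i ≠ 0}.ncard = hammingNorm x := by
  have hsupport : {i | signVector x i ≠ 0} = (({i | x i ≠ 0} : Finset ι) : Set ι) := by
    ext i
    cases h : x i <;> simp [signVector, h]
  rw [hsupport, Set.ncard_coe_finset, hammingNorm]

lemma norm_signVector_sq (x : ι → SignType) : ‖signVector x‖ ^ 2 = hammingNorm x := by
  rw [EuclideanSpace.norm_sq_eq, hammingNorm, card_filter, Nat.cast_sum]
  refine sum_congr rfl fun i _ ↦ ?_
  cases h : x i <;> simp [signVector, h]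

lemma hammingDist_le_norm_signVector_sub_sq (x y : ι → SignType) :
    (hammingDist x y : ℝ) ≤ ‖signVector x - signVector y‖ ^ 2 := by
  rw [EuclideanSpace.norm_sq_eq, hammingDist, card_filter, Nat.cast_sum]
  refine sum_le_sum fun i _ ↦ ?_
  rw [PiLp.sub_apply, Real.norm_eq_abs, sq_abs]
  split_ifs with h
  · rw [Nat.cast_one]
    exact one_le_sq_coe_sub_coe h
  · rw [Nat.cast_zero]
    exact sq_nonneg _

end SignVector

end SparsePacking

open SparsePacking

theorem sparse_vector_packing_general {ι : Type*} [Fintype ι] {k : ℕ} (hk : 0 < k)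
    (hkn : 2 * k ≤ Fintype.card ι) :
    ∃ X : Finset (EuclideanSpace ℝ ι),
      (∀ x ∈ X, Set.ncard {i | x i ≠ 0} = k ∧ ‖x‖ = √k) ∧
      (X : Set (EuclideanSpace ℝ ι)).Pairwise (fun x y ↦ √((k : ℝ) / 2) < ‖x - y‖) ∧
      ((Fintype.card ι : ℝ) / k) ^ ((k : ℝ) / 2) ≤ #X := by
  obtain ⟨X, hweight, hdist, hcard⟩ :=
    exists_constantWeight_code (ι := ι) (α := SignType) (by decide) hk hkn
  refine ⟨X.map ⟨signVector, signVector_injective⟩, ?_, ?_, by rwa [card_map]⟩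
  · simp only [forall_mem_map, Function.Embedding.coeFn_mk]
    intro x hx
    rw [ncard_support_signVector, ← hweight x hx, ← norm_signVector_sq,
      Real.sqrt_sq (norm_nonneg _)]
    exact ⟨rfl, rfl⟩
  · rw [coe_map, Function.Embedding.coeFn_mk, signVector_injective.injOn.pairwise_image]
    intro x hx y hy hxy
    have hfar : (k : ℝ) < 2 * hammingDist x y := by exact_mod_cast hdist hx hy hxy
    have hnorm := hammingDist_le_norm_signVector_sub_sq x y
    exact Real.sqrt_lt' (norm_pos_iff.2 (sub_ne_zero.2 (signVector_injective.ne hxy))) |>.2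
      (by linarith)

/-- Packing set of sparse vectors: there is a finite set `X` of `k`-sparse vectors in `ℝⁿ`
of Euclidean norm at most `√k`, pairwise at Euclidean distance at least `√(k/2)`,
with `|X| ≥ (n/k)^{k/2}`. -/
theorem sparse_vector_packing (n k : ℕ) (hn : 0 < n) (hk : 0 < k) (hkn : 2 * k ≤ n) :
    ∃ X : Finset (EuclideanSpace ℝ (Fin n)),
      (∀ x ∈ X, Set.ncard {i | x i ≠ 0} ≤ k ∧ ‖x‖ ≤ Real.sqrt k) ∧
      (∀ x ∈ X, ∀ y ∈ X, x ≠ y → Real.sqrt ((k : ℝ) / 2) ≤ ‖x - y‖) ∧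
      ((n : ℝ) / k) ^ ((k : ℝ) / 2) ≤ (X.card : ℝ) := by
  obtain ⟨X, hX, hdist, hcard⟩ :=
    sparse_vector_packing_general (ι := Fin n) hk (by rwa [Fintype.card_fin])
  exact ⟨X, fun x hx ↦ ⟨(hX x hx).1.le, (hX x hx).2.le⟩,
    fun x hx y hy hxy ↦ (hdist hx hy hxy).le, by rwa [Fintype.card_fin] at hcard⟩
end

section
/- Let n and k be positive integers with k ≤ n/2, let δ ∈ (0, 1/2], and let A be an m×n real matrix satisfying the Restricted Isometry Property of order 2k with constant δ. Then m ≥ k · ln(n/k) / (2 ln(√(16(1+δ)/(1−δ)) + 1)). -/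
open Finset

/-- The Euclidean (`ℓ₂`) norm of a vector in `ℝ^d`. -/
noncomputable def l2norm {d : ℕ} (v : Fin d → ℝ) : ℝ := Real.sqrt (∑ i, v i ^ 2)

/-!
One-hot encoding turns words of length `k` over an alphabet of `q = ⌊n / k⌋` letters into `k`-sparse
vectors of `ℝ^n`, with squared distance twice the Hamming distance. A greedy (Gilbert–Varshamov)
code of minimum distance at least `k / 2` has at least `(q / 4) ^ (k / 2)` words. By the restricted
isometry property, `A` maps their encodings to points of norm at most `√((1 + δ) k)` with mutual
distances at least `√((1 - δ) k)`, so comparing volumes in `ℝ^m` gives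
`(q / 4) ^ (k / 2) ≤ (1 + 2 x) ^ m` with `x = √((1 + δ) / (1 - δ))`. Since `A` is injective on
any `2 k` coordinates, `m ≥ 2 k`; hence replacing `1 + 2 x` by `1 + 4 x` gains enough to absorb both
the factor `4` and the rounding of `n / k`.
-/

open Module MeasureTheory

section Packing

variable {E ι : Type*} [NormedAddCommGroup E] [NormedSpace ℝ E] [FiniteDimensional ℝ E]

lemma card_le_one_add_pow_finrank_of_separated {s : Finset ι} {p : ι → E} {R r : ℝ} (hR : 0 ≤ R)
    (hr : 0 < r) (hp : ∀ i ∈ s, ‖p i‖ ≤ R)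
    (hsep : (s : Set ι).Pairwise fun i j ↦ r ≤ ‖p i - p j‖) :
    (#s : ℝ) ≤ (1 + 2 * (R / r)) ^ finrank ℝ E := by
  borelize E
  let μ : Measure E := Measure.addHaar
  have hdisj : (s : Set ι).PairwiseDisjoint fun i ↦ Metric.ball (p i) (r / 2) := fun i hi j hj hij ↦
    Metric.ball_disjoint_ball (by linarith [hsep hi hj hij, dist_eq_norm (p i) (p j)])
  have hsub : ⋃ i ∈ s, Metric.ball (p i) (r / 2) ⊆ Metric.ball 0 (R + r / 2) :=
    Set.iUnion₂_subset fun i hi ↦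
      Metric.ball_subset_ball' (by linarith [hp i hi, dist_zero_right (p i)])
  have hball (x : E) {t : ℝ} (ht : 0 < t) :
      μ.real (Metric.ball x t) = t ^ finrank ℝ E * μ.real (Metric.ball 0 1) := by
    rw [Measure.real, μ.addHaar_ball_of_pos x ht, ENNReal.toReal_mul,
      ENNReal.toReal_ofReal (by positivity), Measure.real]
  have hunit : 0 < μ.real (Metric.ball (0 : E) 1) :=
    ENNReal.toReal_pos (Metric.measure_ball_pos μ 0 one_pos).ne' measure_ball_lt_top.ne
  have hvol : #s * (r / 2) ^ finrank ℝ E * μ.real (Metric.ball (0 : E) 1) ≤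
      (R + r / 2) ^ finrank ℝ E * μ.real (Metric.ball (0 : E) 1) :=
    calc #s * (r / 2) ^ finrank ℝ E * μ.real (Metric.ball (0 : E) 1)
        = μ.real (⋃ i ∈ s, Metric.ball (p i) (r / 2)) := by
          rw [measureReal_biUnion_finset hdisj fun i _ ↦ measurableSet_ball]
          simp only [hball _ (half_pos hr), sum_const, nsmul_eq_mul, mul_assoc]
      _ ≤ μ.real (Metric.ball 0 (R + r / 2)) := measureReal_mono hsub measure_ball_lt_top.ne
      _ = _ := hball 0 (by positivity)
  have hratio : 1 + 2 * (R / r) = (R + r / 2) / (r / 2) := by field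
  rw [hratio, div_pow, le_div_iff₀ (by positivity)]
  exact le_of_mul_le_mul_right hvol hunit

end Packing

section Codes

lemma exists_pairwise_not_and_card_le_mul {X : Type*} [Fintype X] {r : X → X → Prop}
    [DecidableRel r] (hrefl : ∀ x, r x x) (hsymm : ∀ x y, r x y → r y x) {B : ℕ}
    (hB : ∀ x, #{y | r x y} ≤ B) :
    ∃ C : Finset X, (C : Set X).Pairwise (fun x y ↦ ¬ r x y) ∧ Fintype.card X ≤ #C * B := by
  classical
  obtain ⟨C, hC, hmax⟩ := (Set.toFinite {C : Finset X |
    (C : Set X).Pairwise fun x y ↦ ¬ r x y}).exists_maximal ⟨∅, by simp⟩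
  refine ⟨C, hC, ?_⟩
  have hcover : univ ⊆ C.biUnion fun x ↦ {y | r x y} := by
    intro y _
    by_contra hy
    simp only [mem_biUnion, mem_filter_univ, not_exists, not_and] at hy
    have hinsert : ((insert y C : Finset X) : Set X).Pairwise fun x y ↦ ¬ r x y := by
      rw [coe_insert, Set.pairwise_insert]
      exact ⟨hC, fun x hx _ ↦ ⟨fun hyx ↦ hy x hx (hsymm y x hyx), hy x hx⟩⟩
    exact hy y (hmax hinsert (subset_insert y C) (mem_insert_self y C)) (hrefl y)
  exact (card_le_card hcover).trans (card_biUnion_le_card_mul _ _ _ fun x _ ↦ hB x)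

variable {κ σ : Type*} [Fintype κ] [Fintype σ] [DecidableEq σ] [Nonempty σ]

lemma card_hammingDist_le [DecidableEq κ] (c : κ → σ) (t : ℕ) :
    #{w : κ → σ | hammingDist c w ≤ t} ≤ 2 ^ Fintype.card κ * Fintype.card σ ^ t := by
  let wordsOff (S : Finset κ) : Finset (κ → σ) :=
    Fintype.piFinset fun i ↦ if i ∈ S then univ else {c i}
  have hcard (S : Finset κ) : #(wordsOff S) = Fintype.card σ ^ #S := by
    simp [wordsOff, Fintype.card_piFinset, apply_ite Finset.card]
  have hcover : ({w | hammingDist c w ≤ t} : Finset (κ → σ)) ⊆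
      ({S | #S ≤ t} : Finset (Finset κ)).biUnion wordsOff := by
    intro w hw
    rw [mem_filter_univ] at hw
    refine mem_biUnion.2 ⟨({i | c i ≠ w i} : Finset κ), (mem_filter_univ _).2 hw, ?_⟩
    refine Fintype.mem_piFinset.2 fun i ↦ ?_
    by_cases hi : c i = w i <;> simp [hi]
  calc #{w : κ → σ | hammingDist c w ≤ t}
      ≤ #{S : Finset κ | #S ≤ t} * Fintype.card σ ^ t := by
        refine (card_le_card hcover).trans (card_biUnion_le_card_mul _ _ _ fun S hS ↦ ?_)
        rw [hcard]
        exact Nat.pow_le_pow_right Fintype.card_pos ((mem_filter_univ S).1 hS)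
    _ ≤ 2 ^ Fintype.card κ * Fintype.card σ ^ t := by
        gcongr
        exact (card_filter_le _ _).trans_eq (by simp)

variable (κ σ) in
lemma exists_code_card_le_two_mul_hammingDist :
    ∃ C : Finset (κ → σ), (C : Set (κ → σ)).Pairwise
        (fun f g ↦ Fintype.card κ ≤ 2 * hammingDist f g) ∧
      Fintype.card σ ^ Fintype.card κ ≤ 4 ^ Fintype.card κ * #C ^ 2 := by
  classical
  set k := Fintype.card κ
  set q := Fintype.card σ
  set t := (k - 1) / 2
  obtain ⟨C, hsep, hcard⟩ := exists_pairwise_not_and_card_le_mul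
    (r := fun f g : κ → σ ↦ hammingDist f g ≤ t) (by simp)
    (fun f g h ↦ hammingDist_comm f g ▸ h) (card_hammingDist_le · t)
  rw [Fintype.card_fun] at hcard
  refine ⟨C, hsep.imp fun f g hfg ↦ by omega, ?_⟩
  have hq : 0 < q := Fintype.card_pos
  refine le_of_mul_le_mul_right ?_ (pow_pos hq k)
  calc q ^ k * q ^ k ≤ #C * (2 ^ k * q ^ t) * (#C * (2 ^ k * q ^ t)) := Nat.mul_le_mul hcard hcard
    _ = 4 ^ k * #C ^ 2 * q ^ (2 * t) := by
        rw [show 4 = 2 * 2 by rfl, mul_pow, pow_mul']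
        ring
    _ ≤ 4 ^ k * #C ^ 2 * q ^ k := by
        gcongr
        omega

end Codes

section OneHot

variable {κ σ : Type*} [DecidableEq σ]

/-- The one-hot encoding of a word `f` over the alphabet `σ`: the indicator vector of the graph
of `f`. It turns Hamming distance into Euclidean distance between sparse vectors. -/
noncomputable def oneHot (f : κ → σ) : EuclideanSpace ℝ (κ × σ) :=
  WithLp.toLp 2 fun p ↦ if f p.1 = p.2 then 1 else 0

lemma setOf_oneHot_ne_zero (f : κ → σ) : {p | oneHot f p ≠ 0} = Set.range fun i ↦ (i, f i) := by
  ext ⟨i, a⟩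
  simp [oneHot]

variable [Fintype κ]

lemma ncard_oneHot_ne_zero (f : κ → σ) : {p | oneHot f p ≠ 0}.ncard = Fintype.card κ := by
  rw [setOf_oneHot_ne_zero, Set.ncard_range_of_injective fun i j hij ↦ congrArg Prod.fst hij,
    Nat.card_eq_fintype_card]

lemma ncard_oneHot_sub_ne_zero_le (f g : κ → σ) :
    {p | (oneHot f - oneHot g) p ≠ 0}.ncard ≤ 2 * Fintype.card κ := by
  have hsub : {p | (oneHot f - oneHot g) p ≠ 0} ⊆
      {p | oneHot f p ≠ 0} ∪ {p | oneHot g p ≠ 0} := by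
    intro p hp
    contrapose! hp
    simp_all
  have hfin (h : κ → σ) : {p | oneHot h p ≠ 0}.Finite :=
    setOf_oneHot_ne_zero h ▸ Set.finite_range _
  calc {p | (oneHot f - oneHot g) p ≠ 0}.ncard
      ≤ {p | oneHot f p ≠ 0}.ncard + {p | oneHot g p ≠ 0}.ncard :=
        (Set.ncard_le_ncard hsub ((hfin f).union (hfin g))).trans (Set.ncard_union_le _ _)
    _ = 2 * Fintype.card κ := by rw [ncard_oneHot_ne_zero, ncard_oneHot_ne_zero, two_mul]

variable [Fintype σ]

lemma inner_oneHot (f g : κ → σ) :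
    inner ℝ (oneHot f) (oneHot g) = (Fintype.card κ : ℝ) - hammingDist f g := by
  have hagree : #{i | f i = g i} + hammingDist f g = Fintype.card κ :=
    card_filter_add_card_filter_not _
  have hinner : inner ℝ (oneHot f) (oneHot g) = (#{i | f i = g i} : ℝ) := by
    simp [PiLp.inner_apply, oneHot, Fintype.sum_prod_type, eq_comm]
  rw [hinner, ← hagree]
  push_cast
  ring

lemma norm_oneHot_sq (f : κ → σ) : ‖oneHot f‖ ^ 2 = Fintype.card κ := by
  rw [← real_inner_self_eq_norm_sq, inner_oneHot, hammingDist_self, Nat.cast_zero, sub_zero]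

lemma norm_oneHot_sub_sq (f g : κ → σ) : ‖oneHot f - oneHot g‖ ^ 2 = 2 * hammingDist f g := by
  rw [norm_sub_sq_real, norm_oneHot_sq, norm_oneHot_sq, inner_oneHot]
  ring

end OneHot

section CoordinateEmbedding

variable {κ ι : Type*} [Fintype κ] [Fintype ι]

/-- The isometric inclusion of `ℝ^κ` into `ℝ^ι` as a coordinate subspace, extending vectors by
zero outside the range of `e`. -/
noncomputable def coordinateEmbedding (e : κ ↪ ι) :
    EuclideanSpace ℝ κ →ₗᵢ[ℝ] EuclideanSpace ℝ ι where
  toLinearMap := (WithLp.linearEquiv 2 ℝ (ι → ℝ)).symm.toLinearMap ∘ₗ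
    Function.ExtendByZero.linearMap ℝ e ∘ₗ (WithLp.linearEquiv 2 ℝ (κ → ℝ)).toLinearMap
  norm_map' z := by
    rw [← sq_eq_sq₀ (norm_nonneg _) (norm_nonneg _), EuclideanSpace.real_norm_sq_eq,
      EuclideanSpace.real_norm_sq_eq]
    refine (Fintype.sum_of_injective e e.injective _ _ (fun i hi ↦ ?_) fun j ↦ ?_).symm
    · simp [Function.extend_apply' _ _ _ hi]
    · simp [e.injective.extend_apply]

lemma ncard_coordinateEmbedding_ne_zero (e : κ ↪ ι) (z : EuclideanSpace ℝ κ) :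
    {i | coordinateEmbedding e z i ≠ 0}.ncard = {j | z j ≠ 0}.ncard := by
  have hsupp : {i | coordinateEmbedding e z i ≠ 0} = e '' {j | z j ≠ 0} :=
    Function.support_extend_zero e.injective
  rw [hsupp, Set.ncard_image_of_injective _ e.injective]

end CoordinateEmbedding

section RestrictedIsometry

variable {ι κ σ F : Type*} [Fintype ι] [Fintype κ] [Fintype σ] [NormedAddCommGroup F]
  [NormedSpace ℝ F] {s : ℕ} {a b : ℝ}

/-- The restricted isometry property of order `s` of a linear map out of `ℝ^ι`, with independent
lower and upper constants: the usual property with constant `δ` is the case `a = 1 - δ` and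
`b = 1 + δ`. -/
def RestrictedIsometry (T : EuclideanSpace ℝ ι →ₗ[ℝ] F) (s : ℕ) (a b : ℝ) : Prop :=
  ∀ z : EuclideanSpace ℝ ι, {i | z i ≠ 0}.ncard ≤ s →
    a * ‖z‖ ^ 2 ≤ ‖T z‖ ^ 2 ∧ ‖T z‖ ^ 2 ≤ b * ‖z‖ ^ 2

namespace RestrictedIsometry

lemma comp_coordinateEmbedding {T : EuclideanSpace ℝ ι →ₗ[ℝ] F} (hT : RestrictedIsometry T s a b)
    (e : κ ↪ ι) : RestrictedIsometry (T ∘ₗ (coordinateEmbedding e).toLinearMap) s a b := by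
  intro z hz
  simpa using hT (coordinateEmbedding e z) ((ncard_coordinateEmbedding_ne_zero e z).trans_le hz)

lemma lower_le_upper [Nonempty ι] {T : EuclideanSpace ℝ ι →ₗ[ℝ] F}
    (hT : RestrictedIsometry T s a b) (hs : 0 < s) : a ≤ b := by
  classical
  obtain ⟨i⟩ := ‹Nonempty ι›
  have hsparse : {j | EuclideanSpace.single i (1 : ℝ) j ≠ 0}.ncard ≤ s := by
    simpa [Pi.single_apply] using Nat.succ_le_of_lt hs
  obtain ⟨hlower, hupper⟩ := hT (EuclideanSpace.single i 1) hsparse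
  simpa using hlower.trans hupper

lemma one_le_sqrt_div [Nonempty ι] {T : EuclideanSpace ℝ ι →ₗ[ℝ] F}
    (hT : RestrictedIsometry T s a b) (ha : 0 < a) (hs : 0 < s) : 1 ≤ √(b / a) :=
  Real.one_le_sqrt.2 ((one_le_div ha).2 (hT.lower_le_upper hs))

variable [FiniteDimensional ℝ F]

lemma card_le_finrank {T : EuclideanSpace ℝ ι →ₗ[ℝ] F} (hT : RestrictedIsometry T s a b)
    (ha : 0 < a) (hs : Fintype.card ι ≤ s) : Fintype.card ι ≤ finrank ℝ F := by
  have hinj : Function.Injective T := by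
    refine (injective_iff_map_eq_zero T).2 fun z hz ↦ ?_
    have hsparse : {i | z i ≠ 0}.ncard ≤ s :=
      (Set.ncard_le_card _).trans (Nat.card_eq_fintype_card.trans_le hs)
    have hnorm : a * ‖z‖ ^ 2 ≤ 0 := by simpa [hz] using (hT z hsparse).1
    simpa using nonpos_of_mul_nonpos_right hnorm ha
  simpa using LinearMap.finrank_le_finrank_of_injective hinj

lemma order_le_finrank {T : EuclideanSpace ℝ ι →ₗ[ℝ] F} (hT : RestrictedIsometry T s a b)
    (ha : 0 < a) (hs : s ≤ Fintype.card ι) : s ≤ finrank ℝ F := by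
  obtain ⟨e⟩ : Nonempty (Fin s ↪ ι) := Function.Embedding.nonempty_of_card_le (by simpa using hs)
  simpa using (hT.comp_coordinateEmbedding e).card_le_finrank ha (by simp)

lemma card_code_le [Nonempty κ] [DecidableEq σ] {T : EuclideanSpace ℝ (κ × σ) →ₗ[ℝ] F}
    (hT : RestrictedIsometry T (2 * Fintype.card κ) a b) (ha : 0 < a) {C : Finset (κ → σ)}
    (hC : (C : Set (κ → σ)).Pairwise fun f g ↦ Fintype.card κ ≤ 2 * hammingDist f g) :
    (#C : ℝ) ≤ (1 + 2 * √(b / a)) ^ finrank ℝ F := by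
  set k := Fintype.card κ with hk_def
  have hk : (0 : ℝ) < k := Nat.cast_pos.2 Fintype.card_pos
  have hbound (f : κ → σ) : ‖T (oneHot f)‖ ≤ √(b * k) := by
    rw [hk_def, ← norm_oneHot_sq f]
    exact Real.le_sqrt_of_sq_le (hT _ (by rw [ncard_oneHot_ne_zero]; omega)).2
  have hsep : (C : Set (κ → σ)).Pairwise fun f g ↦ √(a * k) ≤ ‖T (oneHot f) - T (oneHot g)‖ := by
    intro f hf g hg hfg
    rw [← map_sub]
    refine Real.sqrt_le_iff.2 ⟨norm_nonneg _, ?_⟩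
    calc a * k ≤ a * ‖oneHot f - oneHot g‖ ^ 2 := by
          rw [norm_oneHot_sub_sq]
          gcongr
          exact_mod_cast hC hf hg hfg
      _ ≤ ‖T (oneHot f - oneHot g)‖ ^ 2 := (hT _ (ncard_oneHot_sub_ne_zero_le f g)).1
  have hratio : √(b * k) / √(a * k) = √(b / a) := by
    rw [← Real.sqrt_div' _ (by positivity), mul_div_mul_right _ _ hk.ne']
  rw [← hratio]
  exact card_le_one_add_pow_finrank_of_separated (Real.sqrt_nonneg _)
    (Real.sqrt_pos.2 (by positivity)) (fun f _ ↦ hbound f) hsep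

lemma card_pow_card_le [Nonempty κ] [Nonempty σ] {T : EuclideanSpace ℝ (κ × σ) →ₗ[ℝ] F}
    (hT : RestrictedIsometry T (2 * Fintype.card κ) a b) (ha : 0 < a) :
    (Fintype.card σ : ℝ) ^ Fintype.card κ ≤
      4 ^ Fintype.card κ * (1 + 2 * √(b / a)) ^ (2 * finrank ℝ F) := by
  classical
  obtain ⟨C, hsep, hcard⟩ := exists_code_card_le_two_mul_hammingDist κ σ
  calc (Fintype.card σ : ℝ) ^ Fintype.card κ ≤ 4 ^ Fintype.card κ * (#C : ℝ) ^ 2 :=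
        mod_cast hcard
    _ ≤ 4 ^ Fintype.card κ * (1 + 2 * √(b / a)) ^ (2 * finrank ℝ F) := by
        rw [pow_mul']
        gcongr
        exact hT.card_code_le ha hsep

end RestrictedIsometry

end RestrictedIsometry

lemma le_three_halves_mul_floor {x : ℝ} (hx : 2 ≤ x) : x ≤ 3 / 2 * ⌊x⌋₊ := by
  have hfloor : (2 : ℝ) ≤ ⌊x⌋₊ := mod_cast Nat.le_floor hx
  linarith [Nat.lt_floor_add_one x]

-- The factor `6` is the loss `4` of the code times the loss `3 / 2` of rounding `n / k` down.
lemma six_pow_mul_one_add_two_mul_pow_le {x : ℝ} (hx : 1 ≤ x) {k m : ℕ} (hkm : 2 * k ≤ m) :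
    6 ^ k * (1 + 2 * x) ^ (2 * m) ≤ (4 * x + 1) ^ (2 * m) :=
  calc 6 ^ k * (1 + 2 * x) ^ (2 * m)
      ≤ ((5 / 3) ^ 4) ^ k * (1 + 2 * x) ^ (2 * m) := by gcongr; norm_num
    _ ≤ (5 / 3) ^ (2 * m) * (1 + 2 * x) ^ (2 * m) := by
        rw [← pow_mul]
        gcongr ?_ * _
        exact pow_le_pow_right₀ (by norm_num) (by omega)
    _ = (5 / 3 * (1 + 2 * x)) ^ (2 * m) := (mul_pow _ _ _).symm
    _ ≤ (4 * x + 1) ^ (2 * m) := by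
        gcongr
        linarith

section MeasurementBound

variable {ι F : Type*} [Fintype ι] [Nonempty ι] [NormedAddCommGroup F] [NormedSpace ℝ F]
  [FiniteDimensional ℝ F] {T : EuclideanSpace ℝ ι →ₗ[ℝ] F} {k : ℕ} {a b : ℝ}

namespace RestrictedIsometry

lemma card_div_pow_le (hT : RestrictedIsometry T (2 * k) a b) (ha : 0 < a) (hk : 0 < k)
    (hkι : 2 * k ≤ Fintype.card ι) :
    (Fintype.card ι / k : ℝ) ^ k ≤ (4 * √(b / a) + 1) ^ (2 * finrank ℝ F) := by
  set n := Fintype.card ι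
  set q := n / k
  have hk' : (0 : ℝ) < k := Nat.cast_pos.2 hk
  have hq0 : 0 < q := Nat.div_pos (by omega) hk
  have hnq : (n / k : ℝ) ≤ 3 / 2 * q := by
    have hnk : (2 : ℝ) ≤ n / k := (le_div_iff₀ hk').2 (mod_cast hkι)
    simpa [Nat.floor_div_eq_div] using le_three_halves_mul_floor hnk
  have : NeZero k := ⟨hk.ne'⟩
  have : NeZero q := ⟨hq0.ne'⟩
  obtain ⟨e⟩ : Nonempty (Fin k × Fin q ↪ ι) :=
    Function.Embedding.nonempty_of_card_le (by simpa using Nat.mul_div_le n k)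
  have hTe : RestrictedIsometry (T ∘ₗ (coordinateEmbedding e).toLinearMap)
      (2 * Fintype.card (Fin k)) a b := by
    simpa using hT.comp_coordinateEmbedding e
  have hcode : (q : ℝ) ^ k ≤ 4 ^ k * (1 + 2 * √(b / a)) ^ (2 * finrank ℝ F) := by
    simpa using hTe.card_pow_card_le ha
  calc (n / k : ℝ) ^ k ≤ (3 / 2 * q) ^ k := by gcongr
    _ = (3 / 2) ^ k * (q : ℝ) ^ k := mul_pow _ _ _
    _ ≤ (3 / 2) ^ k * (4 ^ k * (1 + 2 * √(b / a)) ^ (2 * finrank ℝ F)) := by gcongr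
    _ = 6 ^ k * (1 + 2 * √(b / a)) ^ (2 * finrank ℝ F) := by
        rw [← mul_assoc, ← mul_pow]
        norm_num
    _ ≤ (4 * √(b / a) + 1) ^ (2 * finrank ℝ F) :=
        six_pow_mul_one_add_two_mul_pow_le (hT.one_le_sqrt_div ha (by omega))
          (hT.order_le_finrank ha hkι)

lemma mul_log_card_div_le (hT : RestrictedIsometry T (2 * k) a b) (ha : 0 < a) (hk : 0 < k) :
    k * Real.log (Fintype.card ι / k) ≤ 2 * finrank ℝ F * Real.log (4 * √(b / a) + 1) := by
  have hk' : (0 : ℝ) < k := Nat.cast_pos.2 hk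
  have hn : (0 : ℝ) < Fintype.card ι := Nat.cast_pos.2 Fintype.card_pos
  obtain hkι | hkι := le_total (2 * k) (Fintype.card ι)
  · simpa using Real.log_le_log (by positivity) (hT.card_div_pow_le ha hk hkι)
  · -- Here `T` is injective, and the crude bound `log x ≤ x` suffices.
    have hone := hT.one_le_sqrt_div ha (by omega)
    have hlog : 1 ≤ Real.log (4 * √(b / a) + 1) :=
      (Real.le_log_iff_exp_le (by positivity)).2 (by linarith [Real.exp_one_lt_three])
    have hrank : (Fintype.card ι : ℝ) ≤ finrank ℝ F := mod_cast hT.card_le_finrank ha hkι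
    calc k * Real.log (Fintype.card ι / k) ≤ k * (Fintype.card ι / k) := by
          gcongr
          exact Real.log_le_self (by positivity)
      _ = Fintype.card ι := mul_div_cancel₀ _ hk'.ne'
      _ ≤ 2 * finrank ℝ F * 1 := by linarith
      _ ≤ 2 * finrank ℝ F * Real.log (4 * √(b / a) + 1) := by gcongr

end RestrictedIsometry

theorem measurement_lower_bound_general (hT : RestrictedIsometry T (2 * k) a b) (ha : 0 < a)
    (hk : 0 < k) :
    k * Real.log (Fintype.card ι / k) / (2 * Real.log (√(16 * b / a) + 1)) ≤ finrank ℝ F := by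
  have hsqrt : √(16 * b / a) = 4 * √(b / a) := by
    rw [mul_div_assoc, Real.sqrt_mul (by norm_num), show (16 : ℝ) = 4 ^ 2 by norm_num,
      Real.sqrt_sq (by norm_num)]
  have hlog : 0 ≤ Real.log (4 * √(b / a) + 1) :=
    Real.log_nonneg (by linarith [Real.sqrt_nonneg (b / a)])
  rw [hsqrt]
  exact div_le_of_le_mul₀ (by positivity) (by positivity)
    (by linarith [hT.mul_log_card_div_le ha hk])

end MeasurementBound

lemma l2norm_eq_norm_toLp {d : ℕ} (v : Fin d → ℝ) : l2norm v = ‖WithLp.toLp 2 v‖ := by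
  simp [l2norm, EuclideanSpace.norm_eq]

lemma restrictedIsometry_toEuclideanLin {m n s : ℕ} {a b : ℝ} {A : Matrix (Fin m) (Fin n) ℝ}
    (hA : ∀ z : Fin n → ℝ, {i | z i ≠ 0}.ncard ≤ s →
      a * l2norm z ^ 2 ≤ l2norm (A.mulVec z) ^ 2 ∧ l2norm (A.mulVec z) ^ 2 ≤ b * l2norm z ^ 2) :
    RestrictedIsometry A.toEuclideanLin s a b := fun z hz ↦ by
  simpa only [l2norm_eq_norm_toLp, Matrix.toLpLin_apply] using hA z.ofLp hz

/-- Single-block measurement lower bound: if `A` satisfies the RIP of order `2k` with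
constant `δ ∈ (0, 1/2]` and `k ≤ n/2`, then
`m ≥ k ln(n/k) / (2 ln(√(16(1+δ)/(1-δ)) + 1))`. -/
theorem measurement_lower_bound (n k : ℕ) (hn : 0 < n) (hk : 0 < k) (hkn : 2 * k ≤ n)
    (δ : ℝ) (hδ : δ ∈ Set.Ioc (0 : ℝ) (1 / 2))
    (m : ℕ) (A : Matrix (Fin m) (Fin n) ℝ)
    (hRIP : ∀ z : Fin n → ℝ, Set.ncard {i | z i ≠ 0} ≤ 2 * k →
      (1 - δ) * l2norm z ^ 2 ≤ l2norm (A.mulVec z) ^ 2 ∧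
      l2norm (A.mulVec z) ^ 2 ≤ (1 + δ) * l2norm z ^ 2) :
    (m : ℝ) ≥
      (k : ℝ) * Real.log ((n : ℝ) / k) /
        (2 * Real.log (Real.sqrt (16 * (1 + δ) / (1 - δ)) + 1)) := by
  have : Nonempty (Fin n) := ⟨⟨0, hn⟩⟩
  simpa using measurement_lower_bound_general (restrictedIsometry_toEuclideanLin hRIP)
    (by linarith [hδ.2]) hk
end
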